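/- (Proposition 4.3.) Let F be the logistic function, θ ∈ ℝ, δ_1,…,δ_k ∈ ℝ. Let μ̃ be the product probability measure on {0,1}^k under which the coordinates are independent Bernoulli variables with success probabilities F(θ − δ_r), r = 1,…,k, and let μ be μ̃ conditioned on the Guttman space Ω^G. Then for every r = 1,…,k, μ(Y^{(r)} = 1 | Y^{(r−1)} = 1, Y^{(r+1)} = 0) = F(θ − δ_r), where Y^{(1)},…,Y^{(k)} are the coordinate projections and the conventions Y^{(0)} ≡ 1 and Y^{(k+1)} ≡ 0 are used (so for r = k the condition is Y^{(k−1)} = 1 and for r = 1 it is Y^{(2)} = 0). -/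

import Mathlib

open scoped Classical

/-- The logistic function `F(x) = exp x / (1 + exp x)`. -/
noncomputable def logistic (x : ℝ) : ℝ := Real.exp x / (1 + Real.exp x)

/-- A vector in `{0,1}^k` is a Guttman vector if its coordinates are nonincreasing,
i.e. it has the form `(1,…,1,0,…,0)`. -/
def IsGuttman {k : ℕ} (y : Fin k → Bool) : Prop :=
  ∀ i j : Fin k, i ≤ j → y j = true → y i = true

/-- The `r`-th coordinate `Y⁽ʳ⁾` of `y ∈ {0,1}^k` (for `1 ≤ r ≤ k`), with the
conventions `Y⁽⁰⁾ ≡ 1` and `Y⁽ʳ⁾ ≡ 0` for `r > k`. -/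
def coordExt {k : ℕ} (y : Fin k → Bool) (r : ℕ) : Bool :=
  if h0 : r = 0 then true
  else if h : r ≤ k then y ⟨r - 1, by omega⟩ else false

/-- The product (independent Bernoulli) probability mass function on `{0,1}^k`
with success probabilities `F(θ - δ r)`, `r = 1,…,k` (coordinate `i` is `r = i+1`). -/
noncomputable def prodBer (k : ℕ) (θ : ℝ) (δ : ℕ → ℝ) (y : Fin k → Bool) : ℝ :=
  ∏ i : Fin k,
    if y i then logistic (θ - δ ((i : ℕ) + 1)) else 1 - logistic (θ - δ ((i : ℕ) + 1))

/-!
Only two Guttman vectors satisfy `Y⁽ʳ⁻¹⁾ = 1` and `Y⁽ʳ⁺¹⁾ = 0`: those with exactly `r` and exactly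
`r - 1` leading ones. They differ in the `r`-th coordinate alone, so the normalizing constant and
all other Bernoulli factors cancel from the conditional probability, leaving `p / (p + (1 - p)) = p`
with `p = F(θ - δ r)`.
-/

lemma logistic_eq_sigmoid (x : ℝ) : logistic x = Real.sigmoid x := by
  rw [logistic, Real.sigmoid_def, Real.exp_neg]
  field_simp
  ring

lemma logistic_pos (x : ℝ) : 0 < logistic x :=
  logistic_eq_sigmoid x ▸ Real.sigmoid_pos x

lemma logistic_lt_one (x : ℝ) : logistic x < 1 :=
  logistic_eq_sigmoid x ▸ Real.sigmoid_lt_one x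

section ProdBer

variable {k : ℕ} (θ : ℝ) (δ : ℕ → ℝ) (y : Fin k → Bool)

lemma prodBer_pos : 0 < prodBer k θ δ y := by
  refine Finset.prod_pos fun i _ ↦ ?_
  split_ifs
  · exact logistic_pos _
  · exact sub_pos.mpr (logistic_lt_one _)

lemma prodBer_update (i : Fin k) (b : Bool) :
    prodBer k θ δ (Function.update y i b) =
      (if b then logistic (θ - δ (i + 1)) else 1 - logistic (θ - δ (i + 1))) *
        ∏ j ∈ {i}ᶜ, if y j then logistic (θ - δ (j + 1)) else 1 - logistic (θ - δ (j + 1)) := by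
  rw [prodBer, Fintype.prod_eq_mul_prod_compl i, Function.update_self]
  congr 1
  refine Finset.prod_congr rfl fun j hj ↦ ?_
  rw [Function.update_of_ne (by simpa using hj)]

lemma prodBer_update_true_div_add (i : Fin k) :
    prodBer k θ δ (Function.update y i true) /
        (prodBer k θ δ (Function.update y i true) + prodBer k θ δ (Function.update y i false)) =
      logistic (θ - δ (i + 1)) := by
  rw [div_eq_iff (add_pos (prodBer_pos θ δ _) (prodBer_pos θ δ _)).ne',
    prodBer_update, prodBer_update]
  simp only [if_true, Bool.false_eq_true, if_false]
  ring

end ProdBer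

section CoordExt

variable {k : ℕ} {y : Fin k → Bool}

lemma coordExt_val_add_one (y : Fin k → Bool) (i : Fin k) : coordExt y (i + 1) = y i := by
  simp [coordExt]

lemma IsGuttman.antitone_coordExt (hy : IsGuttman y) : Antitone (coordExt y) := by
  intro r s hrs hs
  rcases Nat.eq_zero_or_pos r with rfl | hr
  · rfl
  have hsk : s ≤ k := by
    by_contra hks
    simp [coordExt, hks, (hr.trans_le hrs).ne'] at hs
  simp only [coordExt, (hr.trans_le hrs).ne', hr.ne', hsk, hrs.trans hsk, dite_true,
    dite_false] at hs ⊢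
  exact hy _ _ (Fin.mk_le_mk.mpr (Nat.sub_le_sub_right hrs 1)) hs

end CoordExt

/-- The Guttman vector in `{0,1}^k` with exactly `min m k` ones; since coordinates are indexed from
`0`, the ones sit at the indices below `m`. -/
def guttmanVec (k m : ℕ) : Fin k → Bool := fun i ↦ decide (i < m)

section GuttmanVec

variable {k m : ℕ} {y : Fin k → Bool}

lemma isGuttman_guttmanVec (k m : ℕ) : IsGuttman (guttmanVec k m) := by
  intro i j hij hj
  simp only [guttmanVec, decide_eq_true_eq] at hj ⊢
  exact lt_of_le_of_lt hij hj

lemma coordExt_guttmanVec (hm : m ≤ k) (r : ℕ) :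
    coordExt (guttmanVec k m) r = decide (r ≤ m) := by
  unfold coordExt guttmanVec
  split_ifs with hr₀ hrk
  · simp [hr₀]
  · exact decide_eq_decide.mpr (by simp only; omega)
  · exact (decide_eq_false (by omega)).symm

lemma update_guttmanVec_true (i : Fin k) :
    Function.update (guttmanVec k i) i true = guttmanVec k (i + 1) := by
  funext j
  rcases eq_or_ne j i with rfl | hji
  · simp [guttmanVec]
  · have := Fin.val_ne_of_ne hji
    simp only [Function.update_of_ne hji, guttmanVec, decide_eq_decide]
    omega

lemma update_guttmanVec_false (i : Fin k) :
    Function.update (guttmanVec k i) i false = guttmanVec k i :=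
  Function.update_eq_self_iff.mpr (by simp [guttmanVec])

lemma IsGuttman.coordExt_and_coordExt_add_one_iff (hy : IsGuttman y) (hm : m ≤ k) :
    coordExt y m = true ∧ coordExt y (m + 1) = false ↔ y = guttmanVec k m := by
  constructor
  · rintro ⟨hone, hzero⟩
    funext i
    rw [← coordExt_val_add_one y i, guttmanVec]
    rcases lt_or_ge (i : ℕ) m with him | hmi
    · rw [decide_eq_true him]
      exact hy.antitone_coordExt him hone
    · rw [decide_eq_false hmi.not_gt]
      exact Bool.eq_false_of_le_false
        (hzero ▸ hy.antitone_coordExt (Nat.add_le_add_right hmi 1))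
  · rintro rfl
    simp [coordExt_guttmanVec hm]

lemma IsGuttman.coordExt_and_coordExt_add_two_iff (hy : IsGuttman y) (hm : m < k) :
    coordExt y m = true ∧ coordExt y (m + 2) = false ↔
      y = guttmanVec k (m + 1) ∨ y = guttmanVec k m := by
  rw [← hy.coordExt_and_coordExt_add_one_iff hm, ← hy.coordExt_and_coordExt_add_one_iff hm.le]
  have hm_of_succ : coordExt y (m + 1) = true → coordExt y m = true :=
    hy.antitone_coordExt m.le_succ
  have hsucc_of_add_two : coordExt y (m + 2) = true → coordExt y (m + 1) = true :=
    hy.antitone_coordExt (m + 1).le_succ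
  grind

end GuttmanVec

lemma sum_filter_eq_sum_of_ne_zero {α M : Type*} [Fintype α] [AddCommMonoid M] {f : α → M}
    {p : α → Prop} [DecidablePred p] {s : Finset α} (h : ∀ a, f a ≠ 0 → (p a ↔ a ∈ s)) :
    ∑ a with p a, f a = ∑ a ∈ s, f a := by
  refine Finset.sum_congr_of_eq_on_inter (fun a hp hs ↦ ?_) (fun a hs hp ↦ ?_) fun _ _ _ ↦ rfl
  all_goals
    by_contra hfa
    simp_all

section GuttmanSupport

variable {k : ℕ} {M : Type*} [AddCommMonoid M] {μ : (Fin k → Bool) → M}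

lemma sum_filter_coordExt_eq_guttmanVec (hμ : ∀ y, μ y ≠ 0 → IsGuttman y) (i : Fin k) :
    ∑ y with coordExt y (i + 1) = true ∧ coordExt y i = true ∧ coordExt y (i + 2) = false, μ y =
      μ (guttmanVec k (i + 1)) := by
  rw [← Finset.sum_singleton μ]
  refine sum_filter_eq_sum_of_ne_zero fun y hy ↦ ?_
  have hi : coordExt y (i + 1) = true → coordExt y i = true :=
    (hμ y hy).antitone_coordExt (Nat.le_succ i)
  rw [Finset.mem_singleton, ← (hμ y hy).coordExt_and_coordExt_add_one_iff i.isLt]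
  tauto

lemma sum_filter_coordExt_eq_guttmanVec_add (hμ : ∀ y, μ y ≠ 0 → IsGuttman y) (i : Fin k) :
    ∑ y with coordExt y i = true ∧ coordExt y (i + 2) = false, μ y =
      μ (guttmanVec k (i + 1)) + μ (guttmanVec k i) := by
  have hne : guttmanVec k (i + 1) ≠ guttmanVec k i := fun h ↦ by
    simpa [guttmanVec] using congrFun h i
  rw [← Finset.sum_pair hne]
  refine sum_filter_eq_sum_of_ne_zero fun y hy ↦ ?_
  rw [Finset.mem_insert, Finset.mem_singleton,
    (hμ y hy).coordExt_and_coordExt_add_two_iff i.isLt]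

end GuttmanSupport

lemma sum_prodBer_isGuttman_pos (k : ℕ) (θ : ℝ) (δ : ℕ → ℝ) :
    0 < ∑ y : Fin k → Bool with IsGuttman y, prodBer k θ δ y :=
  Finset.sum_pos (fun y _ ↦ prodBer_pos θ δ y)
    ⟨guttmanVec k 0, by simpa using isGuttman_guttmanVec k 0⟩

/-- Proposition 4.3: for `μ` the product Bernoulli measure with
success probabilities `F(θ - δ r)` conditioned on the Guttman space, one has
`μ(Y⁽ʳ⁾ = 1 | Y⁽ʳ⁻¹⁾ = 1, Y⁽ʳ⁺¹⁾ = 0) = F(θ - δ r)` for every `r = 1,…,k`,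
with the conventions `Y⁽⁰⁾ ≡ 1` and `Y⁽ᵏ⁺¹⁾ ≡ 0`. -/
theorem conditional_rasch_in_conditioned_guttman
    (k : ℕ) (θ : ℝ) (δ : ℕ → ℝ) (μ : (Fin k → Bool) → ℝ)
    (hμ : ∀ y, μ y = (if IsGuttman y then prodBer k θ δ y else 0) /
        ∑ z ∈ Finset.univ.filter (fun z : Fin k → Bool => IsGuttman z), prodBer k θ δ z) :
    ∀ r ∈ Finset.Icc 1 k,
      (∑ y ∈ Finset.univ.filter
          (fun y : Fin k → Bool =>
            coordExt y r = true ∧ coordExt y (r - 1) = true ∧ coordExt y (r + 1) = false),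
          μ y) /
        (∑ y ∈ Finset.univ.filter
          (fun y : Fin k → Bool =>
            coordExt y (r - 1) = true ∧ coordExt y (r + 1) = false), μ y)
        = logistic (θ - δ r) := by
  intro r hr
  obtain ⟨i, rfl⟩ : ∃ i : Fin k, r = i + 1 := by
    obtain ⟨hr₁, hrk⟩ := Finset.mem_Icc.mp hr
    exact ⟨⟨r - 1, by omega⟩, by simp only; omega⟩
  have hsupp : ∀ y, μ y ≠ 0 → IsGuttman y := fun y hy ↦ by
    by_contra hG
    exact hy (by rw [hμ, if_neg hG, zero_div])
  have hZ := (sum_prodBer_isGuttman_pos k θ δ).ne'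
  rw [Nat.add_sub_cancel, sum_filter_coordExt_eq_guttmanVec hsupp,
    sum_filter_coordExt_eq_guttmanVec_add hsupp, hμ, hμ,
    if_pos (isGuttman_guttmanVec k _), if_pos (isGuttman_guttmanVec k _),
    ← add_div, div_div_div_cancel_right₀ hZ]
  simpa only [update_guttmanVec_true, update_guttmanVec_false] using
    prodBer_update_true_div_add θ δ (guttmanVec k i) i
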